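/- Let ν be a probability measure on ℝ^d whose support is contained in a ball of radius R, and let μ = γ_d ⋆ ν be the convolution of the standard Gaussian measure with ν. Then there exists a map T : ℝ^d → ℝ^d which is Lipschitz with Lipschitz constant at most e^{R²/2} and which pushes forward γ_d to μ, i.e. T_*γ_d = μ. -/

import Mathlib

open MeasureTheory Real Set
open scoped ENNReal NNReal

noncomputable section

/-- `ℝ^d` as a Euclidean space. -/
abbrev Ed (d : ℕ) : Type := EuclideanSpace ℝ (Fin d)

/-- The standard Gaussian measure `γ_d` on `ℝ^d` (mean 0, identity covariance). -/
def stdGaussian (d : ℕ) : Measure (Ed d) :=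
  (volume : Measure (Ed d)).withDensity
    fun x => ENNReal.ofReal ((2 * π) ^ (-(d : ℝ) / 2) * Real.exp (-‖x‖ ^ 2 / 2))

/-- The centered Gaussian measure on `ℝ^d` with covariance `a·Id`. -/
def gaussianCov (d : ℕ) (a : ℝ) : Measure (Ed d) :=
  (volume : Measure (Ed d)).withDensity
    fun x => ENNReal.ofReal ((2 * π * a) ^ (-(d : ℝ) / 2) * Real.exp (-‖x‖ ^ 2 / (2 * a)))

/-- The Hessian quadratic form of `f` at `x`, evaluated at the direction `(w, w)`. -/
def hessQF {d : ℕ} (f : Ed d → ℝ) (x w : Ed d) : ℝ :=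
  fderiv ℝ (fun y => fderiv ℝ f y w) x w

/-- The (topological) support of a measure on `ℝ^d`. -/
def msupport {d : ℕ} (μ : Measure (Ed d)) : Set (Ed d) :=
  {x | ∀ U : Set (Ed d), IsOpen U → x ∈ U → μ U ≠ 0}

/-- The convolution `μ ⋆ ν` of two measures on `ℝ^d`: the law of `X + Y`
with `X ∼ μ`, `Y ∼ ν` independent. -/
def mconv {d : ℕ} (μ ν : Measure (Ed d)) : Measure (Ed d) :=
  Measure.map (fun p : Ed d × Ed d => p.1 + p.2) (μ.prod ν)

/-- `μ` is `κ`-log-concave with density `p` w.r.t. Lebesgue measure: its support is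
convex and `−∇² log p(x) ⪰ κ·Id` for `μ`-a.e. `x`. -/
def KLogConcaveD {d : ℕ} (κ : ℝ) (μ : Measure (Ed d)) (p : Ed d → ℝ) : Prop :=
  μ = (volume : Measure (Ed d)).withDensity (fun x => ENNReal.ofReal (p x)) ∧
    Convex ℝ (msupport μ) ∧
    ∀ᵐ x ∂μ, ∀ w : Ed d, hessQF (fun y => Real.log (p y)) x w ≤ -(κ * ‖w‖ ^ 2)

/-- `μ` is `κ`-log-concave. -/
def KLogConcave {d : ℕ} (κ : ℝ) (μ : Measure (Ed d)) : Prop :=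
  ∃ p : Ed d → ℝ, KLogConcaveD κ μ p

/-- `μ` is `β`-semi-log-convex with density `p` w.r.t. Lebesgue measure:
`−∇² log p(x) ⪯ β·Id` for every `x`. -/
def SemiLogConvexD {d : ℕ} (β : ℝ) (μ : Measure (Ed d)) (p : Ed d → ℝ) : Prop :=
  μ = (volume : Measure (Ed d)).withDensity (fun x => ENNReal.ofReal (p x)) ∧
    ∀ x w : Ed d, -(β * ‖w‖ ^ 2) ≤ hessQF (fun y => Real.log (p y)) x w

/-- `μ` is `β`-semi-log-convex. -/
def SemiLogConvex {d : ℕ} (β : ℝ) (μ : Measure (Ed d)) : Prop :=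
  ∃ p : Ed d → ℝ, SemiLogConvexD β μ p

/-- The Ornstein–Uhlenbeck semigroup:
`Q_t g(x) = ∫ g(e^{−t}x + √(1−e^{−2t})·y) dγ_d(y)`. -/
def OU {d : ℕ} (t : ℝ) (f : Ed d → ℝ) (x : Ed d) : ℝ :=
  ∫ y, f (Real.exp (-t) • x + Real.sqrt (1 - Real.exp (-2 * t)) • y) ∂(stdGaussian d)

/-- The heat semigroup: `P_t f(x) = ∫ f(x + √t·y) dγ_d(y)`. -/
def heatSG {d : ℕ} (t : ℝ) (f : Ed d → ℝ) (x : Ed d) : ℝ :=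
  ∫ y, f (x + Real.sqrt t • y) ∂(stdGaussian d)

/-- The entropy of `g` relative to `μ`:
`Ent_μ(g) = ∫ log(g)·g dμ − log(∫ g dμ)·∫ g dμ`. -/
def entRel {d : ℕ} (μ : Measure (Ed d)) (g : Ed d → ℝ) : ℝ :=
  ∫ x, Real.log (g x) * g x ∂μ - Real.log (∫ x, g x ∂μ) * ∫ x, g x ∂μ

/-- The variance of `g` under `μ`. -/
def varOf {d : ℕ} (μ : Measure (Ed d)) (g : Ed d → ℝ) : ℝ :=
  ∫ x, g x ^ 2 ∂μ - (∫ x, g x ∂μ) ^ 2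

/-- The distribution function of a density `p`: `F(λ) = Vol({x : p(x) ≥ λ})`. -/
def distFun {d : ℕ} (p : Ed d → ℝ) (l : ℝ) : ℝ≥0∞ :=
  (volume : Measure (Ed d)) {x | l ≤ p x}

/-- The density of the standard Gaussian measure w.r.t. Lebesgue measure. -/
def gaussPdf (d : ℕ) (x : Ed d) : ℝ :=
  (2 * π) ^ (-(d : ℝ) / 2) * Real.exp (-‖x‖ ^ 2 / 2)

/-- The `q`-Rényi entropy of a density `p`: `h_q = log(∫ p^q)/(1−q)`. -/
def renyi {d : ℕ} (p : Ed d → ℝ) (q : ℝ) : ℝ :=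
  Real.log (∫ x, p x ^ q ∂(volume : Measure (Ed d))) / (1 - q)

/-!
Let `X` be a standard Gaussian vector and `Y` an independent vector of law `ν`. The laws `μₛ` of
`X + s • Y` interpolate between `γ_d` and `γ_d ⋆ ν`, and they solve the continuity equation
`∂ₛ μₛ + div (μₛ vₛ) = 0` with `vₛ z = E[Y | X + s • Y = z]`, so the time-one flow of `v` transports
`γ_d` to `γ_d ⋆ ν`. By Bayes' formula `vₛ z` is the mean of an exponential tilt of a fixed measure,
with parameter `s • z`; hence `D vₛ` is `s` times the covariance of a measure carried by the ball of
radius `R`, which gives `‖D vₛ‖ ≤ s R²`, and the flow is Lipschitz with constant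
`exp (∫₀¹ s R² ds) = exp (R² / 2)`.

The flow is obtained as a limit of Euler schemes. In a step of length `h`, the displacements `h • Y`
and `h • vₛ (X + s • Y)` of `X + s • Y` have the same conditional mean given `X + s • Y`, so for
smooth test functions the two laws differ by `O(h²)`, and these errors sum to `O(h)`. The schemes
are uniformly Lipschitz, so a subsequence converges pointwise by Arzelà–Ascoli.
-/

open Filter Topology
open scoped RealInnerProductSpace BoundedContinuousFunction

section TaylorBound

variable {E F G : Type*} [NormedAddCommGroup E] [NormedSpace ℝ E] [NormedAddCommGroup F]
  [NormedSpace ℝ F] [NormedAddCommGroup G] [NormedSpace ℝ G]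

/-- A quantitative form of `C^{1,1}`: the derivative of `f` is bounded by `M`, and the remainder of
the first-order Taylor expansion of `f` at any point is at most `L * ‖w‖ ^ 2`. Differentiability of
`f` is not a separate field, as the bound on the remainder implies it. -/
structure TaylorBound (f : E → F) (M L : ℝ) : Prop where
  norm_fderiv_le : ∀ x, ‖fderiv ℝ f x‖ ≤ M
  norm_remainder_le : ∀ x w, ‖f (x + w) - f x - fderiv ℝ f x w‖ ≤ L * ‖w‖ ^ 2

theorem hasFDerivAt_of_norm_remainder_le {f : E → F} {f' : E →L[ℝ] F} {x : E} {L : ℝ}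
    (h : ∀ w, ‖f (x + w) - f x - f' w‖ ≤ L * ‖w‖ ^ 2) : HasFDerivAt f f' x := by
  rw [hasFDerivAt_iff_isLittleO_nhds_zero]
  have hO : (fun w => f (x + w) - f x - f' w) =O[𝓝 0] fun w => ‖w‖ ^ 2 :=
    .of_bound L (.of_forall fun w => by simpa using h w)
  exact hO.trans_isLittleO (Asymptotics.isLittleO_norm_pow_id one_lt_two)

namespace TaylorBound

theorem of_forall {f : E → F} (f' : E → E →L[ℝ] F) {M L : ℝ} (hM : ∀ x, ‖f' x‖ ≤ M)
    (hL : ∀ x w, ‖f (x + w) - f x - f' x w‖ ≤ L * ‖w‖ ^ 2) : TaylorBound f M L := by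
  have hf' : fderiv ℝ f = f' := funext fun x => (hasFDerivAt_of_norm_remainder_le (hL x)).fderiv
  exact ⟨fun x => hf' ▸ hM x, fun x w => hf' ▸ hL x w⟩

variable {f : E → F} {g : F → G} {M L a l : ℝ}

theorem nonneg (hf : TaylorBound f M L) : 0 ≤ M :=
  (norm_nonneg _).trans (hf.norm_fderiv_le 0)

theorem differentiable (hf : TaylorBound f M L) : Differentiable ℝ f := fun x =>
  (hasFDerivAt_of_norm_remainder_le (hf.norm_remainder_le x)).differentiableAt

theorem continuous (hf : TaylorBound f M L) : Continuous f :=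
  hf.differentiable.continuous

theorem norm_image_sub_le (hf : TaylorBound f M L) (x y : E) : ‖f y - f x‖ ≤ M * ‖y - x‖ :=
  convex_univ.norm_image_sub_le_of_norm_fderiv_le (fun z _ => hf.differentiable z)
    (fun z _ => hf.norm_fderiv_le z) (mem_univ x) (mem_univ y)

theorem norm_image_add_sub_image_add_le (hf : TaylorBound f M L) (x u w : E) :
    ‖f (x + u) - f (x + w) + fderiv ℝ f x (w - u)‖ ≤ L * ‖u‖ ^ 2 + L * ‖w‖ ^ 2 := by
  have hsplit : f (x + u) - f (x + w) + fderiv ℝ f x (w - u) =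
      (f (x + u) - f x - fderiv ℝ f x u) - (f (x + w) - f x - fderiv ℝ f x w) := by
    rw [map_sub]
    abel
  rw [hsplit]
  exact (norm_sub_le _ _).trans
    (add_le_add (hf.norm_remainder_le x u) (hf.norm_remainder_le x w))

theorem norm_image_add_smul_sub_image_add_smul_le (hf : TaylorBound f M L) (hL : 0 ≤ L) {R : ℝ}
    {u w : E} (hu : ‖u‖ ≤ R) (hw : ‖w‖ ≤ R) (x : E) (h : ℝ) :
    ‖f (x + h • u) - f (x + h • w) + h • fderiv ℝ f x (w - u)‖ ≤ 2 * R ^ 2 * L * h ^ 2 := by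
  rw [← map_smul, smul_sub]
  calc _ ≤ L * ‖h • u‖ ^ 2 + L * ‖h • w‖ ^ 2 := hf.norm_image_add_sub_image_add_le _ _ _
    _ ≤ L * (|h| * R) ^ 2 + L * (|h| * R) ^ 2 := by
        rw [norm_smul, norm_smul, Real.norm_eq_abs]
        gcongr
    _ = 2 * R ^ 2 * L * |h| ^ 2 := by ring
    _ = 2 * R ^ 2 * L * h ^ 2 := by rw [sq_abs]

theorem mono (hf : TaylorBound f M L) (hM : M ≤ a) (hL : L ≤ l) : TaylorBound f a l :=
  ⟨fun x => (hf.norm_fderiv_le x).trans hM,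
    fun x w => (hf.norm_remainder_le x w).trans (by gcongr)⟩

theorem comp (hg : TaylorBound g M L) (hf : TaylorBound f a l) (hL : 0 ≤ L) :
    TaylorBound (fun x => g (f x)) (M * a) (M * l + L * a ^ 2) := by
  have hM := hg.nonneg
  refine .of_forall (fun x => (fderiv ℝ g (f x)).comp (fderiv ℝ f x)) (fun x => ?_) fun x w => ?_
  · exact (ContinuousLinearMap.opNorm_comp_le _ _).trans
      (mul_le_mul (hg.norm_fderiv_le _) (hf.norm_fderiv_le _) (norm_nonneg _) hM)
  set u := f (x + w) - f x with hu
  have hsplit : g (f (x + w)) - g (f x) - ((fderiv ℝ g (f x)).comp (fderiv ℝ f x)) w =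
      fderiv ℝ g (f x) (u - fderiv ℝ f x w) + (g (f x + u) - g (f x) - fderiv ℝ g (f x) u) := by
    simp [hu]
  have h_inner : ‖fderiv ℝ g (f x) (u - fderiv ℝ f x w)‖ ≤ M * (l * ‖w‖ ^ 2) :=
    (ContinuousLinearMap.le_opNorm _ _).trans
      (mul_le_mul (hg.norm_fderiv_le _) (hf.norm_remainder_le x w) (norm_nonneg _) hM)
  have h_u : ‖u‖ ≤ a * ‖w‖ := by simpa using hf.norm_image_sub_le x (x + w)
  calc ‖g (f (x + w)) - g (f x) - ((fderiv ℝ g (f x)).comp (fderiv ℝ f x)) w‖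
      ≤ M * (l * ‖w‖ ^ 2) + L * ‖u‖ ^ 2 :=
        hsplit ▸ norm_add_le_of_le h_inner (hg.norm_remainder_le _ _)
    _ ≤ M * (l * ‖w‖ ^ 2) + L * (a * ‖w‖) ^ 2 := by gcongr
    _ = (M * l + L * a ^ 2) * ‖w‖ ^ 2 := by ring

theorem const_smul_id {s : ℝ} (hs : 0 ≤ s) : TaylorBound (fun x : E => s • x) s 0 := by
  refine .of_forall (fun _ => s • ContinuousLinearMap.id ℝ E) (fun _ => ?_) fun x w => ?_
  · rw [norm_smul, Real.norm_of_nonneg hs]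
    exact mul_le_of_le_one_right hs ContinuousLinearMap.norm_id_le
  · simp

theorem id_add_smul {v : E → E} (hv : TaylorBound v M L) {h : ℝ} (hh : 0 ≤ h) :
    TaylorBound (fun x => x + h • v x) (1 + h * M) (h * L) := by
  refine .of_forall (fun x => ContinuousLinearMap.id ℝ E + h • fderiv ℝ v x) (fun x => ?_)
    fun x w => ?_
  · refine norm_add_le_of_le ContinuousLinearMap.norm_id_le ?_
    rw [norm_smul, Real.norm_of_nonneg hh]
    exact mul_le_mul_of_nonneg_left (hv.norm_fderiv_le x) hh
  · have hsplit : x + w + h • v (x + w) - (x + h • v x) -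
        (ContinuousLinearMap.id ℝ E + h • fderiv ℝ v x) w =
        h • (v (x + w) - v x - fderiv ℝ v x w) := by
      simp only [add_apply, smul_apply, ContinuousLinearMap.id_apply]
      module
    rw [hsplit, norm_smul, Real.norm_of_nonneg hh, mul_assoc]
    exact mul_le_mul_of_nonneg_left (hv.norm_remainder_le x w) hh

end TaylorBound

theorem norm_exp_mul_I_sub_one_sub_le (b : ℝ) :
    ‖Complex.exp (b * Complex.I) - 1 - b * Complex.I‖ ≤ b ^ 2 := by
  let f : ℝ → ℂ := fun x => Complex.exp (x * Complex.I) - x * Complex.I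
  let f' : ℝ → ℂ := fun x => (Complex.exp (Complex.I * x) - 1) * Complex.I
  have hderiv (x : ℝ) : HasDerivAt f (f' x) x := by
    have hlin : HasDerivAt (fun x : ℝ => (x : ℂ) * Complex.I) Complex.I x := by
      simpa using (hasDerivAt_id x).ofReal_comp.mul_const Complex.I
    refine (hlin.cexp.sub hlin).congr_deriv ?_
    simp only [f', mul_comm Complex.I, sub_mul, one_mul]
  have hbound : ∀ x ∈ uIcc 0 b, ‖f' x‖ ≤ |b| := fun x hx => by
    simpa [f'] using Real.norm_exp_I_mul_ofReal_sub_one_le.trans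
      (by simpa using abs_sub_left_of_mem_uIcc hx)
  have hmv := (convex_uIcc 0 b).norm_image_sub_le_of_norm_hasDerivWithin_le
    (fun x _ => (hderiv x).hasDerivWithinAt) hbound left_mem_uIcc right_mem_uIcc
  calc ‖Complex.exp (b * Complex.I) - 1 - b * Complex.I‖ = ‖f b - f 0‖ := by
        simp only [f, Complex.ofReal_zero, zero_mul, Complex.exp_zero, sub_zero]
        congr 1
        ring
    _ ≤ |b| * ‖b - 0‖ := hmv
    _ = b ^ 2 := by rw [sub_zero, Real.norm_eq_abs, ← sq, sq_abs]

theorem taylorBound_innerProbChar {H : Type*} [NormedAddCommGroup H] [InnerProductSpace ℝ H]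
    (t : H) : TaylorBound (BoundedContinuousFunction.innerProbChar t) ‖t‖ (‖t‖ ^ 2) := by
  simp only [funext (BoundedContinuousFunction.innerProbChar_apply t)]
  refine .of_forall (fun x => (innerSL ℝ t).smulRight
    (Complex.exp (⟪x, t⟫ * Complex.I) * Complex.I)) (fun x => ?_) fun x w => ?_
  · simp [ContinuousLinearMap.norm_smulRight_apply, Complex.norm_exp_ofReal_mul_I]
  have hsplit : Complex.exp (⟪x + w, t⟫ * Complex.I) - Complex.exp (⟪x, t⟫ * Complex.I) -
      (innerSL ℝ t).smulRight (Complex.exp (⟪x, t⟫ * Complex.I) * Complex.I) w =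
      Complex.exp (⟪x, t⟫ * Complex.I) *
        (Complex.exp (⟪w, t⟫ * Complex.I) - 1 - ⟪w, t⟫ * Complex.I) := by
    rw [ContinuousLinearMap.smulRight_apply, innerSL_apply_apply, real_inner_comm w t,
      inner_add_left, Complex.ofReal_add, add_mul, Complex.exp_add, Complex.real_smul]
    ring
  rw [hsplit, norm_mul, Complex.norm_exp_ofReal_mul_I, one_mul]
  calc ‖Complex.exp (⟪w, t⟫ * Complex.I) - 1 - ⟪w, t⟫ * Complex.I‖
      ≤ ⟪w, t⟫ ^ 2 := norm_exp_mul_I_sub_one_sub_le _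
    _ ≤ (‖w‖ * ‖t‖) ^ 2 := sq_le_sq.2 (by simpa [abs_mul] using abs_real_inner_le_norm w t)
    _ = ‖t‖ ^ 2 * ‖w‖ ^ 2 := by ring

end TaylorBound


section Compactness

theorem exists_strictMono_tendsto_of_lipschitzWith {X Y : Type*} [PseudoMetricSpace X]
    [ProperSpace X] [MetricSpace Y] [ProperSpace Y] {K : ℝ≥0} {F : ℕ → X → Y}
    (hF : ∀ n, LipschitzWith K (F n)) (hb : ∀ x, Bornology.IsBounded (range fun n => F n x)) :
    ∃ T : X → Y, LipschitzWith K T ∧ ∃ g : ℕ → ℕ, StrictMono g ∧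
      ∀ x, Tendsto (fun n => F (g n) x) atTop (𝓝 (T x)) := by
  let S : Set C(X, Y) := {f | LipschitzWith K f ∧ ∀ x, f x ∈ closure (range fun n => F n x)}
  have himage : ContinuousMap.toFun '' S =
      {f | LipschitzWith K f} ∩ univ.pi fun x => closure (range fun n => F n x) := by
    ext f
    constructor
    · rintro ⟨f, ⟨hf, hmem⟩, rfl⟩
      exact ⟨hf, fun x _ => hmem x⟩
    · rintro ⟨hf, hmem⟩
      exact ⟨⟨f, hf.continuous⟩, ⟨hf, fun x => hmem x (mem_univ x)⟩, rfl⟩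
  have hcompact : IsCompact (ContinuousMap.toFun '' S) := himage ▸
    (isCompact_univ_pi fun x => (hb x).isCompact_closure).inter_left
      (isClosed_setOfPred_lipschitzWith K)
  have hequi : Equicontinuous ((↑) : S → X → Y) :=
    (LipschitzWith.uniformEquicontinuous _ K fun f => f.2.1).equicontinuous
  obtain ⟨T, hT, g, hg, hlim⟩ :=
    (ArzelaAscoli.isCompact_of_equicontinuous S hcompact hequi).tendsto_subseq
      (x := fun n => ⟨F n, (hF n).continuous⟩)
      fun n => ⟨hF n, fun x => subset_closure (mem_range_self n)⟩
  exact ⟨T, hT.1, g, hg, fun x => ((continuous_eval_const x).tendsto T).comp hlim⟩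

end Compactness

section Euler

variable {E : Type*} [NormedAddCommGroup E] [NormedSpace ℝ E]

/-- The Euler scheme with step `h` for the ordinary differential equation `x' = v t x`:
`eulerIter v h k x` is the position at time `k * h` when starting from `x` at time `0`. -/
def eulerIter (v : ℝ → E → E) (h : ℝ) : ℕ → E → E
  | 0 => id
  | k + 1 => fun x => eulerIter v h k x + h • v (k * h) (eulerIter v h k x)

/-- The Euler approximation with `n` steps of the time-one flow of `x' = v t x`. -/
def eulerFlow (v : ℝ → E → E) (n : ℕ) : E → E :=
  eulerIter v (n : ℝ)⁻¹ n

variable {v : ℝ → E → E} {h : ℝ} {k : ℕ}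

theorem natCast_mul_mem_Icc_of_succ_mul_le_one (hh : 0 ≤ h) (hk : ((k + 1 : ℕ) : ℝ) * h ≤ 1) :
    (k : ℝ) * h ∈ Icc (0 : ℝ) 1 := by
  push_cast at hk
  exact ⟨by positivity, by linarith⟩

theorem norm_eulerIter_sub_le {B : ℝ} (hB : ∀ s ∈ Icc (0 : ℝ) 1, ∀ x, ‖v s x‖ ≤ B) (hh : 0 ≤ h)
    (hk : k * h ≤ 1) (x : E) : ‖eulerIter v h k x - x‖ ≤ k * h * B := by
  induction k with
  | zero => simp [eulerIter]
  | succ k ih =>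
    have hs := natCast_mul_mem_Icc_of_succ_mul_le_one hh hk
    have hstep : ‖h • v (k * h) (eulerIter v h k x)‖ ≤ h * B := by
      rw [norm_smul, Real.norm_of_nonneg hh]
      exact mul_le_mul_of_nonneg_left (hB _ hs _) hh
    calc ‖eulerIter v h (k + 1) x - x‖
        = ‖(eulerIter v h k x - x) + h • v (k * h) (eulerIter v h k x)‖ := by
          rw [eulerIter, add_sub_right_comm]
      _ ≤ k * h * B + h * B := norm_add_le_of_le (ih hs.2) hstep
      _ = (k + 1 : ℕ) * h * B := by push_cast; ring

theorem norm_eulerIter_sub_eulerIter_le {K : ℝ → ℝ}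
    (hv : ∀ s ∈ Icc (0 : ℝ) 1, ∀ x y, ‖v s x - v s y‖ ≤ K s * ‖x - y‖) (hh : 0 ≤ h)
    (hk : k * h ≤ 1) (x y : E) : ‖eulerIter v h k x - eulerIter v h k y‖ ≤
      Real.exp (h * ∑ i ∈ Finset.range k, K (i * h)) * ‖x - y‖ := by
  induction k with
  | zero => simp [eulerIter]
  | succ k ih =>
    have hs := natCast_mul_mem_Icc_of_succ_mul_le_one hh hk
    set a := eulerIter v h k x
    set b := eulerIter v h k y
    calc ‖a + h • v (k * h) a - (b + h • v (k * h) b)‖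
        = ‖(a - b) + h • (v (k * h) a - v (k * h) b)‖ := by congr 1; module
      _ ≤ ‖a - b‖ + h * (K (k * h) * ‖a - b‖) := by
        refine norm_add_le_of_le le_rfl ?_
        rw [norm_smul, Real.norm_of_nonneg hh]
        exact mul_le_mul_of_nonneg_left (hv _ hs a b) hh
      _ = (h * K (k * h) + 1) * ‖a - b‖ := by ring
      _ ≤ Real.exp (h * K (k * h)) *
          (Real.exp (h * ∑ i ∈ Finset.range k, K (i * h)) * ‖x - y‖) :=
        mul_le_mul (Real.add_one_le_exp _) (ih hs.2) (norm_nonneg _) (Real.exp_nonneg _)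
      _ = Real.exp (h * ∑ i ∈ Finset.range (k + 1), K (i * h)) * ‖x - y‖ := by
        rw [← mul_assoc, ← Real.exp_add, Finset.sum_range_succ, mul_add, add_comm (h * K _)]

theorem inv_mul_sum_le_integral_of_monotoneOn {K : ℝ → ℝ} (hK : MonotoneOn K (Icc 0 1)) {n : ℕ}
    (hn : n ≠ 0) :
    (n : ℝ)⁻¹ * ∑ i ∈ Finset.range n, K (i * (n : ℝ)⁻¹) ≤ ∫ s in (0 : ℝ)..1, K s := by
  have hn' : (0 : ℝ) < n := by positivity
  have hmono : MonotoneOn (fun s => K (s / n)) (Icc 0 (0 + n)) := by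
    refine hK.comp (fun s _ t _ hst => div_le_div_of_nonneg_right hst hn'.le) fun s hs => ?_
    exact ⟨div_nonneg hs.1 hn'.le, (div_le_one hn').2 (by simpa using hs.2)⟩
  calc (n : ℝ)⁻¹ * ∑ i ∈ Finset.range n, K (i * (n : ℝ)⁻¹)
      ≤ (n : ℝ)⁻¹ * ∫ s in (0 : ℝ)..0 + n, K (s / n) := by
        gcongr
        simpa [div_eq_mul_inv] using hmono.sum_le_integral
    _ = ∫ s in (0 : ℝ)..1, K s := by
        rw [intervalIntegral.inv_mul_integral_comp_div, zero_add, zero_div, div_self hn'.ne']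

theorem norm_eulerFlow_sub_le {B : ℝ} (hB : ∀ s ∈ Icc (0 : ℝ) 1, ∀ x, ‖v s x‖ ≤ B) {n : ℕ}
    (hn : n ≠ 0) (x : E) : ‖eulerFlow v n x - x‖ ≤ B := by
  have hone : (n : ℝ) * (n : ℝ)⁻¹ = 1 := mul_inv_cancel₀ (Nat.cast_ne_zero.2 hn)
  simpa [eulerFlow, hone] using norm_eulerIter_sub_le hB (by positivity) hone.le x

theorem lipschitzWith_eulerFlow {K : ℝ → ℝ}
    (hv : ∀ s ∈ Icc (0 : ℝ) 1, ∀ x y, ‖v s x - v s y‖ ≤ K s * ‖x - y‖)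
    (hK : MonotoneOn K (Icc 0 1)) {n : ℕ} (hn : n ≠ 0) :
    LipschitzWith (Real.exp (∫ s in (0 : ℝ)..1, K s)).toNNReal (eulerFlow v n) := by
  refine .of_dist_le_mul fun x y => ?_
  rw [Real.coe_toNNReal _ (Real.exp_nonneg _), dist_eq_norm, dist_eq_norm]
  refine (norm_eulerIter_sub_eulerIter_le hv (by positivity)
    (mul_inv_cancel₀ (Nat.cast_ne_zero.2 hn)).le x y).trans ?_
  gcongr
  exact inv_mul_sum_le_integral_of_monotoneOn hK hn

/-- A quantitative weak form, on the time interval `[0, 1]`, of the continuity equation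
`∂ₛ μₛ + div (μₛ vₛ) = 0`: moving `μₛ` for a time `h` along the frozen field `vₛ` gives `μₛ₊ₕ` up to
an error `O(h²)` when tested against functions with a `TaylorBound`. -/
def WeakContinuityEquation [MeasurableSpace E] (μ : ℝ → Measure E) (v : ℝ → E → E) (C : ℝ) :
    Prop :=
  ∀ ⦃s h : ℝ⦄, 0 ≤ s → 0 ≤ h → s + h ≤ 1 → ∀ (φ : E →ᵇ ℂ) (N : ℝ), TaylorBound φ N N →
    ‖∫ z, φ (z + h • v s z) ∂μ s - ∫ z, φ z ∂μ (s + h)‖ ≤ C * N * h ^ 2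

theorem TaylorBound.comp_id_add_smul {F : Type*} [NormedAddCommGroup F] [NormedSpace ℝ F]
    {φ : E → F} {N M L : ℝ} {w : E → E} (hφ : TaylorBound φ N N) (hw : TaylorBound w M L)
    (hL : 0 ≤ L) (hh : 0 ≤ h) (hh1 : h ≤ 1) :
    TaylorBound (fun x => φ (x + h • w x)) (N * (1 + h * (2 * M + M ^ 2 + L)))
      (N * (1 + h * (2 * M + M ^ 2 + L))) := by
  have hN := hφ.nonneg
  have hM := hw.nonneg
  have hML : 0 ≤ M + M ^ 2 + L := by positivity
  refine (hφ.comp (hw.id_add_smul hh) hN).mono (mul_le_mul_of_nonneg_left ?_ hN) ?_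
  · nlinarith [mul_nonneg hh hML]
  · rw [← mul_add]
    refine mul_le_mul_of_nonneg_left ?_ hN
    nlinarith [mul_nonneg (mul_nonneg hh (sub_nonneg.2 hh1)) (sq_nonneg M)]

namespace WeakContinuityEquation

variable [MeasurableSpace E] {μ : ℝ → Measure E} {C M L : ℝ}

-- Composing the test function with the last Euler step leaves the error of the first `k` steps,
-- for a test function whose constant is larger by a factor `1 + h * (2 * M + M ^ 2 + L)`.
theorem norm_integral_eulerIter_sub_le (hμ : WeakContinuityEquation μ v C) (hC : 0 ≤ C)
    (hv : ∀ s ∈ Icc (0 : ℝ) 1, TaylorBound (v s) M L) (hL : 0 ≤ L) (hh : 0 ≤ h) (hk : k * h ≤ 1)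
    (φ : E →ᵇ ℂ) {N : ℝ} (hφ : TaylorBound φ N N) :
    ‖∫ x, φ (eulerIter v h k x) ∂μ 0 - ∫ z, φ z ∂μ (k * h)‖ ≤
      k * (C * N * h ^ 2) * (1 + h * (2 * M + M ^ 2 + L)) ^ k := by
  induction k generalizing φ N with
  | zero => simp [eulerIter]
  | succ k ih =>
    have hs := natCast_mul_mem_Icc_of_succ_mul_le_one hh hk
    have htime : ((k + 1 : ℕ) : ℝ) * h = k * h + h := by push_cast; ring
    have hh1 : h ≤ 1 := by linarith [hs.1]
    have hM := (hv _ hs).nonneg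
    have hN := hφ.nonneg
    set q := 1 + h * (2 * M + M ^ 2 + L)
    have hq1 : 1 ≤ q := le_add_of_nonneg_right (by positivity)
    let ψ : E →ᵇ ℂ := φ.compContinuous
      ⟨fun x => x + h • v (k * h) x, ((hv _ hs).id_add_smul hh).continuous⟩
    have hψ : TaylorBound ψ (N * q) (N * q) := hφ.comp_id_add_smul (hv _ hs) hL hh hh1
    have hlast : ‖∫ z, ψ z ∂μ (k * h) - ∫ z, φ z ∂μ (k * h + h)‖ ≤ C * N * h ^ 2 :=
      hμ hs.1 hh (htime ▸ hk) φ N hφ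
    calc ‖∫ x, φ (eulerIter v h (k + 1) x) ∂μ 0 - ∫ z, φ z ∂μ ((k + 1 : ℕ) * h)‖
        ≤ k * (C * (N * q) * h ^ 2) * q ^ k + C * N * h ^ 2 := by
          rw [htime]
          exact (norm_sub_le_norm_sub_add_norm_sub _ _ _).trans (add_le_add (ih hs.2 ψ hψ) hlast)
      _ ≤ k * (C * (N * q) * h ^ 2) * q ^ k + C * N * h ^ 2 * q ^ (k + 1) := by
          refine add_le_add_right (le_mul_of_one_le_right ?_ (one_le_pow₀ hq1)) _
          positivity
      _ = (k + 1 : ℕ) * (C * N * h ^ 2) * q ^ (k + 1) := by push_cast; ring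

theorem tendsto_integral_eulerFlow (hμ : WeakContinuityEquation μ v C) (hC : 0 ≤ C)
    (hv : ∀ s ∈ Icc (0 : ℝ) 1, TaylorBound (v s) M L) (hL : 0 ≤ L) (φ : E →ᵇ ℂ) {N : ℝ}
    (hφ : TaylorBound φ N N) :
    Tendsto (fun n => ∫ x, φ (eulerFlow v n x) ∂μ 0) atTop (𝓝 (∫ z, φ z ∂μ 1)) := by
  have hM := (hv 0 (by simp)).nonneg
  have hN := hφ.nonneg
  set c := 2 * M + M ^ 2 + L
  have : 0 ≤ c := by positivity
  rw [tendsto_iff_norm_sub_tendsto_zero]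
  refine squeeze_zero' (g := fun n : ℕ => C * N * Real.exp c * (n : ℝ)⁻¹)
    (.of_forall fun n => norm_nonneg _) ?_
    (by simpa using tendsto_inv_atTop_nhds_zero_nat.const_mul (C * N * Real.exp c))
  filter_upwards [eventually_ne_atTop 0] with n hn
  have hone : (n : ℝ) * (n : ℝ)⁻¹ = 1 := mul_inv_cancel₀ (Nat.cast_ne_zero.2 hn)
  have hpow : (1 + (n : ℝ)⁻¹ * c) ^ n ≤ Real.exp c := by
    calc (1 + (n : ℝ)⁻¹ * c) ^ n ≤ Real.exp ((n : ℝ)⁻¹ * c) ^ n := by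
          gcongr
          exact add_comm (1 : ℝ) _ ▸ Real.add_one_le_exp _
      _ = Real.exp c := by rw [← Real.exp_nat_mul, ← mul_assoc, hone, one_mul]
  calc ‖∫ x, φ (eulerFlow v n x) ∂μ 0 - ∫ z, φ z ∂μ 1‖
      ≤ n * (C * N * (n : ℝ)⁻¹ ^ 2) * (1 + (n : ℝ)⁻¹ * c) ^ n := by
        simpa only [eulerFlow, hone] using
          hμ.norm_integral_eulerIter_sub_le hC hv hL (by positivity) hone.le φ hφ
    _ ≤ n * (C * N * (n : ℝ)⁻¹ ^ 2) * Real.exp c := by gcongr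
    _ = C * N * Real.exp c * (n : ℝ)⁻¹ * (n * (n : ℝ)⁻¹) := by ring
    _ = C * N * Real.exp c * (n : ℝ)⁻¹ := by rw [hone, mul_one]

end WeakContinuityEquation

theorem measure_eq_of_forall_taylorBound {H : Type*} [NormedAddCommGroup H]
    [InnerProductSpace ℝ H] [CompleteSpace H] [SecondCountableTopology H] [MeasurableSpace H]
    [BorelSpace H] {μ ν : Measure H} [IsFiniteMeasure μ] [IsFiniteMeasure ν]
    (h : ∀ (φ : H →ᵇ ℂ) (N : ℝ), TaylorBound φ N N → ∫ x, φ x ∂μ = ∫ x, φ x ∂ν) : μ = ν := by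
  refine Measure.ext_of_charFun (funext fun t => ?_)
  rw [charFun_eq_integral_innerProbChar, charFun_eq_integral_innerProbChar]
  exact h _ (‖t‖ + ‖t‖ ^ 2) <| (taylorBound_innerProbChar t).mono
    (le_add_of_nonneg_right (by positivity)) (le_add_of_nonneg_left (by positivity))

theorem WeakContinuityEquation.exists_lipschitzWith_map_eq {H : Type*} [NormedAddCommGroup H]
    [InnerProductSpace ℝ H] [FiniteDimensional ℝ H] [MeasurableSpace H] [BorelSpace H]
    {μ : ℝ → Measure H} [IsProbabilityMeasure (μ 0)] [IsProbabilityMeasure (μ 1)]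
    {v : ℝ → H → H} {K : ℝ → ℝ} {B C L : ℝ} (hμ : WeakContinuityEquation μ v C) (hC : 0 ≤ C)
    (hv : ∀ s ∈ Icc (0 : ℝ) 1, TaylorBound (v s) (K s) L) (hL : 0 ≤ L)
    (hB : ∀ s ∈ Icc (0 : ℝ) 1, ∀ x, ‖v s x‖ ≤ B) (hK : MonotoneOn K (Icc 0 1)) :
    ∃ T : H → H, LipschitzWith (Real.exp (∫ s in (0 : ℝ)..1, K s)).toNNReal T ∧
      (μ 0).map T = μ 1 := by
  have : ProperSpace H := FiniteDimensional.proper ℝ H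
  have hF (n : ℕ) := lipschitzWith_eulerFlow
    (fun s hs x y => (hv s hs).norm_image_sub_le y x) hK n.succ_ne_zero
  have hbounded (x : H) : Bornology.IsBounded (range fun n => eulerFlow v (n + 1) x) :=
    Metric.isBounded_closedBall.subset <| range_subset_iff.2 fun n =>
      mem_closedBall_iff_norm.2 (norm_eulerFlow_sub_le hB n.succ_ne_zero x)
  obtain ⟨T, hT, g, hg, hlim⟩ := exists_strictMono_tendsto_of_lipschitzWith hF hbounded
  have hTm : AEMeasurable T (μ 0) := hT.continuous.measurable.aemeasurable
  have := Measure.isProbabilityMeasure_map hTm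
  refine ⟨T, hT, measure_eq_of_forall_taylorBound fun φ N hφ => ?_⟩
  rw [integral_map hTm φ.continuous.aestronglyMeasurable]
  have hlim_map : Tendsto (fun n => ∫ x, φ (eulerFlow v (g n + 1) x) ∂μ 0) atTop
      (𝓝 (∫ x, φ (T x) ∂μ 0)) :=
    tendsto_integral_of_dominated_convergence (fun _ => ‖φ‖)
      (fun n => (φ.continuous.comp (hF (g n)).continuous).aestronglyMeasurable)
      (integrable_const _) (fun n => ae_of_all _ fun x => φ.norm_coe_le_norm _)
      (ae_of_all _ fun x => (φ.continuous.tendsto (T x)).comp (hlim x))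
  have hv_one (s : ℝ) (hs : s ∈ Icc (0 : ℝ) 1) : TaylorBound (v s) (K 1) L :=
    (hv s hs).mono (hK hs (right_mem_Icc.2 zero_le_one) hs.2) le_rfl
  exact tendsto_nhds_unique hlim_map <| (hμ.tendsto_integral_eulerFlow hC hv_one hL φ hφ).comp
    ((tendsto_add_atTop_nat 1).comp hg.tendsto_atTop)

end Euler

section Tilting

theorem exp_sub_one_le_mul_exp (a : ℝ) : Real.exp a - 1 ≤ a * Real.exp a := by
  have := mul_le_mul_of_nonneg_right (Real.add_one_le_exp (-a)) (Real.exp_nonneg a)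
  rw [← Real.exp_add, neg_add_cancel, Real.exp_zero] at this
  linarith

theorem abs_exp_sub_one_le (a : ℝ) : |Real.exp a - 1| ≤ |a| * (1 + Real.exp a) := by
  have hexp := Real.exp_nonneg a
  rw [abs_le]
  constructor
  · nlinarith [Real.add_one_le_exp a, neg_abs_le a, abs_nonneg a]
  · nlinarith [exp_sub_one_le_mul_exp a, le_abs_self a, abs_nonneg a]

theorem abs_exp_sub_one_sub_self_le (a : ℝ) :
    |Real.exp a - 1 - a| ≤ a ^ 2 * (1 + Real.exp a) := by
  have hlower : 0 ≤ Real.exp a - 1 - a := by linarith [Real.add_one_le_exp a]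
  have hupper : Real.exp a - 1 - a ≤ a * (Real.exp a - 1) := by
    linarith [exp_sub_one_le_mul_exp a]
  calc |Real.exp a - 1 - a| ≤ |a * (Real.exp a - 1)| := by
        rw [abs_of_nonneg hlower]
        exact hupper.trans (le_abs_self _)
    _ ≤ |a| * (|a| * (1 + Real.exp a)) := by
        rw [abs_mul]
        exact mul_le_mul_of_nonneg_left (abs_exp_sub_one_le a) (abs_nonneg a)
    _ = a ^ 2 * (1 + Real.exp a) := by rw [← mul_assoc, abs_mul_abs_self, sq]

theorem norm_exp_sub_one_sub_self_smul_sub_le {G : Type*} [SeminormedAddCommGroup G]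
    [NormedSpace ℝ G] (a : ℝ) (u c : G) :
    ‖(Real.exp a - 1 - a) • u - (Real.exp a - 1) • c‖ ≤
      (a ^ 2 * ‖u‖ + |a| * ‖c‖) * (1 + Real.exp a) := by
  calc ‖(Real.exp a - 1 - a) • u - (Real.exp a - 1) • c‖
      ≤ |Real.exp a - 1 - a| * ‖u‖ + |Real.exp a - 1| * ‖c‖ := by
        simpa only [norm_smul, Real.norm_eq_abs] using
          norm_sub_le ((Real.exp a - 1 - a) • u) ((Real.exp a - 1) • c)
    _ ≤ a ^ 2 * (1 + Real.exp a) * ‖u‖ + |a| * (1 + Real.exp a) * ‖c‖ := by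
        gcongr
        exacts [abs_exp_sub_one_sub_self_le a, abs_exp_sub_one_le a]
    _ = (a ^ 2 * ‖u‖ + |a| * ‖c‖) * (1 + Real.exp a) := by ring

section Measure

variable {α G : Type*} [MeasurableSpace α] {μ : Measure α} [NormedAddCommGroup G]

theorem integrable_exp_of_ae_le [IsFiniteMeasure μ] {f : α → ℝ} {c : ℝ}
    (hf : AEStronglyMeasurable f μ) (hc : ∀ᵐ x ∂μ, f x ≤ c) :
    Integrable (fun x => Real.exp (f x)) μ :=
  .of_bound (Real.continuous_exp.comp_aestronglyMeasurable hf) (Real.exp c) <|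
    hc.mono fun x hx => by simpa using hx

theorem integral_exp_smul_sub_const [NeZero μ] [NormedSpace ℝ G] [CompleteSpace G] {f : α → ℝ}
    (hf : Integrable (fun x => Real.exp (f x)) μ) {g : α → G} (hg : Integrable g (μ.tilted f))
    (m : G) : ∫ x, Real.exp (f x) • (g x - m) ∂μ =
      (∫ x, Real.exp (f x) ∂μ) • (∫ x, g x ∂μ.tilted f - m) := by
  have := isProbabilityMeasure_tilted hf
  have hsub : ∫ x, (g x - m) ∂μ.tilted f = ∫ x, g x ∂μ.tilted f - m := by
    rw [integral_sub hg (integrable_const m), integral_const, probReal_univ, one_smul]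
  rw [← hsub, integral_tilted]
  simp only [div_eq_inv_mul, mul_smul, integral_smul]
  rw [smul_inv_smul₀ (integral_exp_pos hf).ne']

theorem norm_integral_le_of_ae_norm_le [NormedSpace ℝ G] [IsProbabilityMeasure μ] {f : α → G}
    {C : ℝ} (hf : ∀ᵐ x ∂μ, ‖f x‖ ≤ C) : ‖∫ x, f x ∂μ‖ ≤ C := by
  simpa using norm_integral_le_of_norm_le_const hf

variable [MeasurableSpace G] [BorelSpace G] [SecondCountableTopology G] {ρ : Measure G}
  [IsFiniteMeasure ρ] {R : ℝ}

theorem memLp_id_of_ae_norm_le (hρ : ∀ᵐ y ∂ρ, ‖y‖ ≤ R) (p : ℝ≥0∞) : MemLp id p ρ :=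
  .of_bound aestronglyMeasurable_id R hρ

theorem memLp_id_map_sub_const (hρ : ∀ᵐ y ∂ρ, ‖y‖ ≤ R) (m : G) (p : ℝ≥0∞) :
    MemLp id p (ρ.map fun y => y - m) :=
  (memLp_map_measure_iff aestronglyMeasurable_id (by fun_prop)).2
    ((memLp_id_of_ae_norm_le hρ p).sub (memLp_const m))

theorem integrable_id_of_ae_norm_le (hρ : ∀ᵐ y ∂ρ, ‖y‖ ≤ R) : Integrable (fun y => y) ρ :=
  (memLp_id_of_ae_norm_le hρ 1).integrable le_rfl

end Measure

variable {H : Type*} [NormedAddCommGroup H] [InnerProductSpace ℝ H]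

theorem norm_le_of_abs_inner_self_le {T : H →L[ℝ] H} (hT : (T : H →ₗ[ℝ] H).IsSymmetric) {C : ℝ}
    (hC : 0 ≤ C) (h : ∀ x, |⟪T x, x⟫| ≤ C * ‖x‖ ^ 2) : ‖T‖ ≤ C := by
  rw [T.norm_eq_iSup_rayleighQuotient hT]
  refine ciSup_le fun x => ?_
  rw [ContinuousLinearMap.rayleighQuotient, T.reApplyInnerSelf_apply, RCLike.re_to_real, abs_div,
    abs_of_nonneg (sq_nonneg ‖x‖)]
  exact div_le_of_le_mul₀ (sq_nonneg _) hC (h x)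

theorem norm_exp_inner_sub_one_sub_inner_smul_sub_le {R : ℝ} {w b c : H} (hb : ‖b‖ ≤ 2 * R)
    (hc : ‖c‖ ≤ R ^ 2 * ‖w‖) :
    ‖(Real.exp ⟪w, b⟫ - 1 - ⟪w, b⟫) • b - (Real.exp ⟪w, b⟫ - 1) • c‖ ≤
      10 * R ^ 3 * ‖w‖ ^ 2 * (1 + Real.exp ⟪w, b⟫) := by
  have hR : 0 ≤ 2 * R := (norm_nonneg b).trans hb
  set a := ⟪w, b⟫
  have ha : |a| ≤ 2 * R * ‖w‖ := (abs_real_inner_le_norm _ _).trans <| by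
    rw [mul_comm]
    gcongr
  calc ‖(Real.exp a - 1 - a) • b - (Real.exp a - 1) • c‖
      ≤ (|a| ^ 2 * ‖b‖ + |a| * ‖c‖) * (1 + Real.exp a) := by
        rw [sq_abs]
        exact norm_exp_sub_one_sub_self_smul_sub_le a b c
    _ ≤ ((2 * R * ‖w‖) ^ 2 * (2 * R) + 2 * R * ‖w‖ * (R ^ 2 * ‖w‖)) * (1 + Real.exp a) := by
        gcongr
    _ = 10 * R ^ 3 * ‖w‖ ^ 2 * (1 + Real.exp a) := by ring

variable [MeasurableSpace H] [BorelSpace H] [SecondCountableTopology H] {ρ : Measure H}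
  [IsProbabilityMeasure ρ] {R : ℝ}

theorem integrable_exp_inner (hρ : ∀ᵐ y ∂ρ, ‖y‖ ≤ R) (w : H) :
    Integrable (fun y => Real.exp ⟪w, y⟫) ρ :=
  integrable_exp_of_ae_le (c := ‖w‖ * R) (by fun_prop) <| hρ.mono fun y hy =>
    (real_inner_le_norm w y).trans (by gcongr)

theorem integrable_exp_inner_sub (hρ : ∀ᵐ y ∂ρ, ‖y‖ ≤ R) (m w : H) :
    Integrable (fun y => Real.exp ⟪w, y - m⟫) ρ := by
  simpa only [inner_sub_right, Real.exp_sub] using (integrable_exp_inner hρ w).div_const _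

theorem tilted_inner_sub (hρ : ∀ᵐ y ∂ρ, ‖y‖ ≤ R) (m w : H) :
    (ρ.tilted fun y => ⟪w, y - m⟫) = ρ.tilted fun y => ⟪w, y⟫ := by
  have := isProbabilityMeasure_tilted (integrable_exp_inner hρ w)
  have hsplit : (fun y => ⟪w, y - m⟫) = (fun y => ⟪w, y⟫) + fun _ => -⟪w, m⟫ :=
    funext fun y => (inner_sub_right w y m).trans (sub_eq_add_neg _ _)
  rw [hsplit, ← tilted_tilted (integrable_exp_inner hρ w), tilted_const]

/-- The mean of the exponential tilt `ρ.tilted ⟪w, ·⟫`, that is, the gradient at `w` of the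
logarithmic Laplace transform of `ρ`. -/
def tiltedMean (ρ : Measure H) (w : H) : H :=
  ∫ y, y ∂ρ.tilted fun y => ⟪w, y⟫

variable [CompleteSpace H]

/-- The covariance operator `w ↦ ∫ ⟪w, y - m⟫ • (y - m) ∂ρ` of `ρ`, where `m` is the mean of `ρ`.
Mathlib's `covarianceOperator` is not centred, hence the translation. -/
def centralCovariance (ρ : Measure H) : H →L[ℝ] H :=
  ProbabilityTheory.covarianceOperator (ρ.map fun y => y - ∫ z, z ∂ρ)

theorem centralCovariance_apply (hρ : ∀ᵐ y ∂ρ, ‖y‖ ≤ R) (w : H) :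
    centralCovariance ρ w = ∫ y, ⟪w, y - ∫ z, z ∂ρ⟫ • (y - ∫ z, z ∂ρ) ∂ρ := by
  rw [centralCovariance, ProbabilityTheory.covarianceOperator_apply (memLp_id_map_sub_const hρ _ 2),
    integral_map (by fun_prop) (by fun_prop)]

theorem inner_centralCovariance_self (hρ : ∀ᵐ y ∂ρ, ‖y‖ ≤ R) (w : H) :
    ⟪centralCovariance ρ w, w⟫ = ProbabilityTheory.variance (fun y => ⟪w, y⟫) ρ := by
  rw [centralCovariance, ProbabilityTheory.covarianceOperator_inner (memLp_id_map_sub_const hρ _ 2),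
    integral_map (by fun_prop) (by fun_prop), ProbabilityTheory.variance_eq_integral (by fun_prop),
    integral_inner (integrable_id_of_ae_norm_le hρ)]
  simp only [inner_sub_right, sq]

theorem norm_centralCovariance_le (hρ : ∀ᵐ y ∂ρ, ‖y‖ ≤ R) : ‖centralCovariance ρ‖ ≤ R ^ 2 := by
  have hsymm : (centralCovariance ρ : H →ₗ[ℝ] H).IsSymmetric :=
    ProbabilityTheory.isPositive_covarianceOperator.isSymmetric
  refine norm_le_of_abs_inner_self_le hsymm (sq_nonneg R) fun w => ?_
  have hsq : ∀ᵐ y ∂ρ, ‖⟪w, y⟫ ^ 2‖ ≤ R ^ 2 * ‖w‖ ^ 2 := hρ.mono fun y hy => by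
    rw [norm_pow, ← mul_pow, mul_comm R]
    gcongr
    exact (norm_inner_le_norm w y).trans (by gcongr)
  rw [inner_centralCovariance_self hρ, abs_of_nonneg (ProbabilityTheory.variance_nonneg _ _)]
  calc ProbabilityTheory.variance (fun y => ⟪w, y⟫) ρ
      ≤ ∫ y, ⟪w, y⟫ ^ 2 ∂ρ := ProbabilityTheory.variance_le_expectation_sq (by fun_prop)
    _ ≤ ‖∫ y, ⟪w, y⟫ ^ 2 ∂ρ‖ := le_abs_self _
    _ ≤ R ^ 2 * ‖w‖ ^ 2 := norm_integral_le_of_ae_norm_le hsq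

theorem integral_exp_inner_sub_smul_sub (hρ : ∀ᵐ y ∂ρ, ‖y‖ ≤ R) (m w : H) :
    ∫ y, Real.exp ⟪w, y - m⟫ • (y - m) ∂ρ =
      (∫ y, Real.exp ⟪w, y - m⟫ ∂ρ) • (tiltedMean ρ w - m) := by
  have hexp := integrable_exp_inner_sub hρ m w
  have := isProbabilityMeasure_tilted hexp
  rw [integral_exp_smul_sub_const hexp
    (integrable_id_of_ae_norm_le ((tilted_absolutelyContinuous ρ _).ae_le hρ)),
    tilted_inner_sub hρ, tiltedMean]

theorem integral_exp_smul_tiltedMean_remainder (hρ : ∀ᵐ y ∂ρ, ‖y‖ ≤ R) {m : H}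
    (hm : ∫ y, y ∂ρ = m) (w : H) :
    (∫ y, Real.exp ⟪w, y - m⟫ ∂ρ) • (tiltedMean ρ w - m - centralCovariance ρ w) =
      ∫ y, ((Real.exp ⟪w, y - m⟫ - 1 - ⟪w, y - m⟫) • (y - m) -
        (Real.exp ⟪w, y - m⟫ - 1) • centralCovariance ρ w) ∂ρ := by
  have hid := integrable_id_of_ae_norm_le hρ
  have hb : Integrable (fun y => y - m) ρ := hid.sub (integrable_const m)
  have hb_le : ∀ᵐ y ∂ρ, ‖y - m‖ ≤ R + ‖m‖ := hρ.mono fun y hy => norm_sub_le_of_le hy le_rfl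
  have hexp := integrable_exp_inner_sub hρ m w
  have hexp_smul : Integrable (fun y => Real.exp ⟪w, y - m⟫ • (y - m)) ρ :=
    hexp.smul_bdd _ (by fun_prop) hb_le
  have hinner_smul : Integrable (fun y => ⟪w, y - m⟫ • (y - m)) ρ :=
    (hb.const_inner w).smul_bdd _ (by fun_prop) hb_le
  have hmean : ∫ y, (y - m) ∂ρ = 0 := by
    rw [integral_sub hid (integrable_const m), hm, integral_const, probReal_univ, one_smul,
      sub_self]
  have hcov : ∫ y, ⟪w, y - m⟫ • (y - m) ∂ρ = centralCovariance ρ w := by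
    rw [centralCovariance_apply hρ, hm]
  have hexp_sub : Integrable (fun y => Real.exp ⟪w, y - m⟫ • (y - m) - (y - m)) ρ :=
    hexp_smul.sub hb
  have hfirst : Integrable (fun y => (Real.exp ⟪w, y - m⟫ - 1 - ⟪w, y - m⟫) • (y - m)) ρ := by
    simp only [sub_smul, one_smul]
    exact hexp_sub.sub hinner_smul
  have hsecond : Integrable (fun y => Real.exp ⟪w, y - m⟫ - 1) ρ := hexp.sub (integrable_const 1)
  rw [integral_sub hfirst (hsecond.smul_const _), integral_smul_const,
    integral_sub hexp (integrable_const 1)]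
  simp only [sub_smul _ _ (_ - m), one_smul]
  rw [integral_sub hexp_sub hinner_smul, integral_sub hexp_smul hb,
    integral_exp_inner_sub_smul_sub hρ, hmean, hcov, integral_const, probReal_univ, one_smul]
  module

theorem one_le_integral_exp_inner_sub_mean (hρ : ∀ᵐ y ∂ρ, ‖y‖ ≤ R) {m : H} (hm : ∫ y, y ∂ρ = m)
    (w : H) : 1 ≤ ∫ y, Real.exp ⟪w, y - m⟫ ∂ρ := by
  have hid := integrable_id_of_ae_norm_le hρ
  have hb : Integrable (fun y => y - m) ρ := hid.sub (integrable_const m)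
  have hinner : Integrable (fun y => ⟪w, y - m⟫) ρ := hb.const_inner w
  calc (1 : ℝ) = ∫ y, (⟪w, y - m⟫ + 1) ∂ρ := by
        rw [integral_add hinner (integrable_const 1),
          integral_inner hb, integral_sub hid (integrable_const m), hm]
        simp
    _ ≤ ∫ y, Real.exp ⟪w, y - m⟫ ∂ρ :=
        integral_mono (hinner.add (integrable_const 1)) (integrable_exp_inner_sub hρ m w)
          fun y => Real.add_one_le_exp _

theorem norm_tiltedMean_remainder_zero_le (hρ : ∀ᵐ y ∂ρ, ‖y‖ ≤ R) (w : H) :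
    ‖tiltedMean ρ w - ∫ y, y ∂ρ - centralCovariance ρ w‖ ≤ 20 * R ^ 3 * ‖w‖ ^ 2 := by
  obtain ⟨m, hm⟩ : ∃ m, ∫ y, y ∂ρ = m := ⟨_, rfl⟩
  set c := centralCovariance ρ w
  set Z := ∫ y, Real.exp ⟪w, y - m⟫ ∂ρ
  have hZ : 1 ≤ Z := one_le_integral_exp_inner_sub_mean hρ hm w
  have hR : 0 ≤ R := (norm_nonneg _).trans (norm_integral_le_of_ae_norm_le hρ)
  have hexp := integrable_exp_inner_sub hρ m w
  have hc : ‖c‖ ≤ R ^ 2 * ‖w‖ :=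
    (centralCovariance ρ).le_of_opNorm_le (norm_centralCovariance_le hρ) w
  have hbound : ∀ᵐ y ∂ρ, ‖(Real.exp ⟪w, y - m⟫ - 1 - ⟪w, y - m⟫) • (y - m) -
      (Real.exp ⟪w, y - m⟫ - 1) • c‖ ≤ 10 * R ^ 3 * ‖w‖ ^ 2 * (1 + Real.exp ⟪w, y - m⟫) := by
    filter_upwards [hρ] with y hy
    have hb : ‖y - m‖ ≤ 2 * R := two_mul R ▸
      norm_sub_le_of_le hy (hm ▸ norm_integral_le_of_ae_norm_le hρ)
    exact norm_exp_inner_sub_one_sub_inner_smul_sub_le hb hc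
  have hscaled : Z * ‖tiltedMean ρ w - m - c‖ ≤ Z * (20 * R ^ 3 * ‖w‖ ^ 2) := by
    calc Z * ‖tiltedMean ρ w - m - c‖ = ‖Z • (tiltedMean ρ w - m - c)‖ := by
          rw [norm_smul, Real.norm_of_nonneg (by positivity)]
      _ ≤ ∫ y, 10 * R ^ 3 * ‖w‖ ^ 2 * (1 + Real.exp ⟪w, y - m⟫) ∂ρ := by
          rw [integral_exp_smul_tiltedMean_remainder hρ hm]
          exact norm_integral_le_of_norm_le (((integrable_const 1).add hexp).const_mul _) hbound
      _ = 10 * R ^ 3 * ‖w‖ ^ 2 * (1 + Z) := by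
          rw [integral_const_mul, integral_add (integrable_const 1) hexp]
          simp [Z]
      _ ≤ 10 * R ^ 3 * ‖w‖ ^ 2 * (Z + Z) := by gcongr
      _ = Z * (20 * R ^ 3 * ‖w‖ ^ 2) := by ring
  exact hm ▸ le_of_mul_le_mul_left hscaled (by positivity)

theorem taylorBound_tiltedMean (hρ : ∀ᵐ y ∂ρ, ‖y‖ ≤ R) :
    TaylorBound (tiltedMean ρ) (R ^ 2) (20 * R ^ 3) := by
  have hprob (x : H) := isProbabilityMeasure_tilted (integrable_exp_inner hρ x)
  have hae (x : H) := (tilted_absolutelyContinuous ρ fun y => ⟪x, y⟫).ae_le hρ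
  refine .of_forall (fun x => centralCovariance (ρ.tilted fun y => ⟪x, y⟫))
    (fun x => norm_centralCovariance_le (hae x)) fun x w => ?_
  -- Tilting by `x + w` is tilting by `x` and then by `w`, so the expansion at `0` suffices.
  have hadd : tiltedMean ρ (x + w) = tiltedMean (ρ.tilted fun y => ⟪x, y⟫) w := by
    simp only [tiltedMean, tilted_tilted (integrable_exp_inner hρ x), inner_add_left, Pi.add_def]
  exact hadd ▸ norm_tiltedMean_remainder_zero_le (hae x) w

end Tilting

section GaussianShift

theorem map_add_right_withDensity {G : Type*} [AddGroup G] [MeasurableSpace G] [MeasurableAdd G]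
    (μ : Measure G) [μ.IsAddRightInvariant] {f : G → ℝ≥0∞} (hf : Measurable f) (u : G) :
    (μ.withDensity f).map (· + u) = μ.withDensity fun x => f (x - u) := by
  refine Measure.ext_of_lintegral _ fun g hg => ?_
  have hfu : Measurable fun x => f (x - u) := by
    simp only [sub_eq_add_neg]
    exact hf.comp (measurable_add_const (-u))
  have hgu : Measurable fun x => g (x + u) := hg.comp (measurable_add_const u)
  rw [lintegral_map hg (measurable_add_const u), lintegral_withDensity_eq_lintegral_mul _ hf hgu,
    lintegral_withDensity_eq_lintegral_mul _ hfu hg,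
    ← lintegral_add_right_eq_self ((fun x => f (x - u)) * g) u]
  simp only [Pi.mul_apply, add_sub_cancel_right]

/-- The logarithm at `x` of the density of the translate by `u` of a standard Gaussian measure with
respect to that Gaussian measure. -/
def logShiftDensity {H : Type*} [NormedAddCommGroup H] [InnerProductSpace ℝ H] (u x : H) : ℝ :=
  ⟪x, u⟫ - ‖u‖ ^ 2 / 2

variable {d : ℕ}

@[fun_prop]
theorem measurable_exp_logShiftDensity {Ω : Type*} [MeasurableSpace Ω] {u x : Ω → Ed d}
    (hu : Measurable u) (hx : Measurable x) :
    Measurable fun ω => Real.exp (logShiftDensity (u ω) (x ω)) := by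
  unfold logShiftDensity
  fun_prop

instance isProbabilityMeasure_stdGaussian : IsProbabilityMeasure (stdGaussian d) := by
  have hmass : ∫ x : Ed d, Real.exp (-(1 / 2) * ‖x‖ ^ 2) = (2 * π) ^ ((d : ℝ) / 2) := by
    rw [GaussianFourier.integral_rexp_neg_mul_sq_norm (by norm_num)]
    simp [mul_comm]
  have hint : Integrable fun x : Ed d => Real.exp (-(1 / 2) * ‖x‖ ^ 2) :=
    .of_integral_ne_zero <| hmass ▸ by positivity
  have hexponent (x : Ed d) : -‖x‖ ^ 2 / 2 = -(1 / 2) * ‖x‖ ^ 2 := by ring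
  refine ⟨?_⟩
  simp only [stdGaussian, withDensity_apply _ MeasurableSet.univ, Measure.restrict_univ, hexponent]
  rw [← ofReal_integral_eq_lintegral_ofReal (hint.const_mul _)
    (ae_of_all _ fun x => by positivity), integral_const_mul, hmass,
    ← Real.rpow_add (by positivity), neg_div, neg_add_cancel, Real.rpow_zero, ENNReal.ofReal_one]

theorem map_add_right_stdGaussian (u : Ed d) : (stdGaussian d).map (· + u) =
    (stdGaussian d).withDensity fun x => ENNReal.ofReal (Real.exp (logShiftDensity u x)) := by
  rw [stdGaussian, map_add_right_withDensity _ (by fun_prop),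
    ← withDensity_mul _ (by fun_prop) (by fun_prop)]
  congr 1 with x
  rw [Pi.mul_apply, ← ENNReal.ofReal_mul (by positivity), mul_assoc, ← Real.exp_add]
  congr 3
  rw [norm_sub_sq_real, logShiftDensity]
  ring

variable {Ω : Type*} [MeasurableSpace Ω] {ν : Measure Ω} [SFinite ν] {u : Ω → Ed d}

theorem map_add_snd_stdGaussian_prod (hu : Measurable u) :
    ((stdGaussian d).prod ν).map (fun p => (p.1 + u p.2, p.2)) =
      ((stdGaussian d).prod ν).withDensity fun p =>
        ENNReal.ofReal (Real.exp (logShiftDensity (u p.2) p.1)) := by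
  refine Measure.ext_of_lintegral _ fun f hf => ?_
  rw [lintegral_map hf (by fun_prop), lintegral_withDensity_eq_lintegral_mul _ (by fun_prop) hf,
    lintegral_prod_symm' _ (by fun_prop), lintegral_prod_symm' _ (by fun_prop)]
  refine lintegral_congr fun y => ?_
  have hfy : Measurable fun x => f (x, y) := by fun_prop
  rw [← lintegral_map hfy (measurable_add_const (u y)), map_add_right_stdGaussian,
    lintegral_withDensity_eq_lintegral_mul _ (by fun_prop) hfy]
  rfl

theorem integral_add_snd_stdGaussian_prod {F : Type*} [NormedAddCommGroup F] [NormedSpace ℝ F]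
    (hu : Measurable u) {f : Ed d × Ω → F} (hf : StronglyMeasurable f)
    (hint : Integrable (fun p => f (p.1 + u p.2, p.2)) ((stdGaussian d).prod ν)) :
    ∫ p, f (p.1 + u p.2, p.2) ∂(stdGaussian d).prod ν =
      ∫ x, ∫ y, Real.exp (logShiftDensity (u y) x) • f (x, y) ∂ν ∂stdGaussian d := by
  have hshear : Measurable fun p : Ed d × Ω => (p.1 + u p.2, p.2) := by fun_prop
  have hdensity : Measurable fun p : Ed d × Ω =>
      ENNReal.ofReal (Real.exp (logShiftDensity (u p.2) p.1)) := by fun_prop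
  have hweighted : Integrable (fun p => Real.exp (logShiftDensity (u p.2) p.1) • f p)
      ((stdGaussian d).prod ν) := by
    have := (integrable_map_measure hf.aestronglyMeasurable hshear.aemeasurable).2 hint
    rw [map_add_snd_stdGaussian_prod hu,
      integrable_withDensity_iff_integrable_smul' hdensity (by simp)] at this
    simpa only [ENNReal.toReal_ofReal (Real.exp_nonneg _)] using this
  rw [← integral_map hshear.aemeasurable hf.aestronglyMeasurable, map_add_snd_stdGaussian_prod hu,
    integral_withDensity_eq_integral_toReal_smul hdensity (by simp)]
  simp only [ENNReal.toReal_ofReal (Real.exp_nonneg _)]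
  exact integral_prod _ hweighted

end GaussianShift

section GaussianChannel

variable {d : ℕ}

theorem ae_mem_of_msupport_subset {ν : Measure (Ed d)} {S : Set (Ed d)} (hν : msupport ν ⊆ S) :
    ∀ᵐ y ∂ν, y ∈ S := by
  have hsupport : ν.support ⊆ msupport ν := by
    rw [Measure.support_eq_forall_isOpen]
    exact fun x hx U hU hxU => (hx U hxU hU).ne'
  exact Filter.mem_of_superset Measure.support_mem_ae (hsupport.trans hν)

/-- The conditional expectation `E[Y | X + s • Y = z]`, where `X` is a standard Gaussian vector and
`Y` an independent vector of law `ν`. By Bayes' formula, the law of `Y` given `X + s • Y = z` is the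
tilt of `ν` by the Gaussian likelihood. -/
def posteriorMean (ν : Measure (Ed d)) (s : ℝ) (z : Ed d) : Ed d :=
  ∫ y, y ∂ν.tilted fun y => logShiftDensity (s • y) z

/-- The law of `X + s • Y`, where `X` is a standard Gaussian vector and `Y` an independent vector of
law `ν`. -/
def gaussianChannel (ν : Measure (Ed d)) (s : ℝ) : Measure (Ed d) :=
  ((stdGaussian d).prod ν).map fun p => p.1 + s • p.2

theorem gaussianChannel_one (ν : Measure (Ed d)) :
    gaussianChannel ν 1 = mconv (stdGaussian d) ν := by
  simp only [gaussianChannel, mconv, one_smul]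

variable {ν : Measure (Ed d)} [IsProbabilityMeasure ν] {R s : ℝ}

theorem gaussianChannel_zero : gaussianChannel ν 0 = stdGaussian d := by
  simp only [gaussianChannel, zero_smul, add_zero]
  exact Measure.fst_prod

instance isProbabilityMeasure_gaussianChannel : IsProbabilityMeasure (gaussianChannel ν s) :=
  Measure.isProbabilityMeasure_map (by fun_prop)

theorem integrable_exp_logShiftDensity (s : ℝ) (z : Ed d) :
    Integrable (fun y => Real.exp (logShiftDensity (s • y) z)) ν := by
  refine integrable_exp_of_ae_le (c := ‖z‖ ^ 2 / 2) ?_ (ae_of_all _ fun y => ?_)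
  · unfold logShiftDensity
    fun_prop
  · rw [logShiftDensity]
    linarith [norm_sub_sq_real z (s • y), sq_nonneg ‖z - s • y‖]

theorem norm_posteriorMean_le (hν : ∀ᵐ y ∂ν, ‖y‖ ≤ R) (s : ℝ) (z : Ed d) :
    ‖posteriorMean ν s z‖ ≤ R :=
  have := isProbabilityMeasure_tilted (integrable_exp_logShiftDensity (ν := ν) s z)
  norm_integral_le_of_ae_norm_le ((tilted_absolutelyContinuous ν _).ae_le hν)

theorem posteriorMean_eq_tiltedMean (s : ℝ) (z : Ed d) : posteriorMean ν s z =
    tiltedMean (ν.tilted fun y => logShiftDensity (s • y) 0) (s • z) := by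
  rw [tiltedMean, tilted_tilted (integrable_exp_logShiftDensity s 0), posteriorMean]
  congr 2 with y
  simp only [logShiftDensity, Pi.add_apply, inner_zero_left, real_inner_smul_left,
    real_inner_smul_right]
  ring

theorem taylorBound_posteriorMean (hν : ∀ᵐ y ∂ν, ‖y‖ ≤ R) (hs : 0 ≤ s) :
    TaylorBound (posteriorMean ν s) (R ^ 2 * s) (20 * R ^ 3 * s ^ 2) := by
  have := isProbabilityMeasure_tilted (integrable_exp_logShiftDensity (ν := ν) s 0)
  have hR : 0 ≤ R := (norm_nonneg _).trans (norm_posteriorMean_le hν s 0)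
  rw [funext (posteriorMean_eq_tiltedMean s)]
  simpa only [mul_zero, zero_add] using
    (taylorBound_tiltedMean ((tilted_absolutelyContinuous ν _).ae_le hν)).comp
      (.const_smul_id hs) (by positivity)

variable {F : Type*} [NormedAddCommGroup F] [NormedSpace ℝ F]

theorem integral_exp_logShiftDensity_smul_sub_posteriorMean [CompleteSpace F]
    (hν : ∀ᵐ y ∂ν, ‖y‖ ≤ R) (s : ℝ) (z : Ed d) (A : Ed d →L[ℝ] F) :
    ∫ y, Real.exp (logShiftDensity (s • y) z) • A (y - posteriorMean ν s z) ∂ν = 0 := by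
  have hexp := integrable_exp_logShiftDensity (ν := ν) s z
  have := isProbabilityMeasure_tilted hexp
  have hbound : ∀ᵐ y ∂ν, ‖y - posteriorMean ν s z‖ ≤ R + R :=
    hν.mono fun y hy => norm_sub_le_of_le hy (norm_posteriorMean_le hν s z)
  have hint : Integrable
      (fun y => Real.exp (logShiftDensity (s • y) z) • (y - posteriorMean ν s z)) ν :=
    hexp.smul_bdd _ (by fun_prop) hbound
  simp only [← A.map_smul]
  rw [A.integral_comp_comm hint, integral_exp_smul_sub_const hexp
    (integrable_id_of_ae_norm_le ((tilted_absolutelyContinuous ν _).ae_le hν)), posteriorMean,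
    sub_self, smul_zero, A.map_zero]

variable {D : Ed d → Ed d →L[ℝ] F} {N : ℝ}

theorem stronglyMeasurable_apply_sub_posteriorMean (hν : ∀ᵐ y ∂ν, ‖y‖ ≤ R) (hs : 0 ≤ s)
    (hD : StronglyMeasurable D) :
    StronglyMeasurable fun p : Ed d × Ed d => D p.1 (p.2 - posteriorMean ν s p.1) := by
  have hmean := (taylorBound_posteriorMean hν hs).continuous
  exact isBoundedBilinearMap_apply.continuous.comp_stronglyMeasurable
    ((hD.comp_measurable measurable_fst).prodMk (by fun_prop))

theorem integrable_apply_sub_posteriorMean (hν : ∀ᵐ y ∂ν, ‖y‖ ≤ R) (hs : 0 ≤ s)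
    (hD : StronglyMeasurable D) (hN : ∀ z, ‖D z‖ ≤ N) :
    Integrable (fun p => D (p.1 + s • p.2) (p.2 - posteriorMean ν s (p.1 + s • p.2)))
      ((stdGaussian d).prod ν) := by
  have hmeas := (stronglyMeasurable_apply_sub_posteriorMean hν hs hD).comp_measurable
    (g := fun p : Ed d × Ed d => (p.1 + s • p.2, p.2)) (by fun_prop)
  refine .of_bound hmeas.aestronglyMeasurable (N * (R + R)) ?_
  filter_upwards [Measure.quasiMeasurePreserving_snd.ae hν] with p hp
  exact (D _).le_of_opNorm_le_of_le (hN _) (norm_sub_le_of_le hp (norm_posteriorMean_le hν s _))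

theorem integral_apply_sub_posteriorMean [CompleteSpace F] (hν : ∀ᵐ y ∂ν, ‖y‖ ≤ R) (hs : 0 ≤ s)
    (hD : StronglyMeasurable D) (hN : ∀ z, ‖D z‖ ≤ N) :
    ∫ p, D (p.1 + s • p.2) (p.2 - posteriorMean ν s (p.1 + s • p.2)) ∂(stdGaussian d).prod ν =
      0 := by
  rw [integral_add_snd_stdGaussian_prod (measurable_const_smul s)
    (stronglyMeasurable_apply_sub_posteriorMean hν hs hD)
    (integrable_apply_sub_posteriorMean hν hs hD hN)]
  simp only [integral_exp_logShiftDensity_smul_sub_posteriorMean hν, integral_zero]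

theorem weakContinuityEquation_gaussianChannel (hν : ∀ᵐ y ∂ν, ‖y‖ ≤ R) :
    WeakContinuityEquation (gaussianChannel ν) (posteriorMean ν) (2 * R ^ 2) := by
  intro s h hs _ _ φ N hφ
  have hv := (taylorBound_posteriorMean hν hs).continuous
  have hD : StronglyMeasurable (fderiv ℝ φ) := (measurable_fderiv ℝ φ).stronglyMeasurable
  set v := posteriorMean ν s
  set z : Ed d × Ed d → Ed d := fun p => p.1 + s • p.2
  have hzh (p : Ed d × Ed d) : p.1 + (s + h) • p.2 = z p + h • p.2 := by
    simp only [z]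
    module
  have hbounded {g : Ed d × Ed d → Ed d} (hg : Continuous g) :
      Integrable (fun p => φ (g p)) ((stdGaussian d).prod ν) :=
    .of_bound (φ.continuous.comp hg).aestronglyMeasurable ‖φ‖
      (ae_of_all _ fun p => φ.norm_coe_le_norm _)
  have hflow := hbounded (g := fun p => z p + h • v (z p)) (by fun_prop)
  have hshift := hbounded (g := fun p => z p + h • p.2) (by fun_prop)
  have hdiff : Integrable (fun p => φ (z p + h • v (z p)) - φ (z p + h • p.2))
      ((stdGaussian d).prod ν) := hflow.sub hshift
  have hcorrection : Integrable (fun p => h • fderiv ℝ φ (z p) (p.2 - v (z p)))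
      ((stdGaussian d).prod ν) :=
    (integrable_apply_sub_posteriorMean hν hs hD hφ.norm_fderiv_le).smul h
  have hpointwise : ∀ᵐ p ∂(stdGaussian d).prod ν, ‖φ (z p + h • v (z p)) - φ (z p + h • p.2) +
      h • fderiv ℝ φ (z p) (p.2 - v (z p))‖ ≤ 2 * R ^ 2 * N * h ^ 2 := by
    filter_upwards [Measure.quasiMeasurePreserving_snd.ae hν] with p hp
    exact hφ.norm_image_add_smul_sub_image_add_smul_le hφ.nonneg (norm_posteriorMean_le hν s _)
      hp _ h
  calc ‖∫ x, φ (x + h • v x) ∂gaussianChannel ν s - ∫ x, φ x ∂gaussianChannel ν (s + h)‖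
      = ‖∫ p, (φ (z p + h • v (z p)) - φ (z p + h • p.2) +
          h • fderiv ℝ φ (z p) (p.2 - v (z p))) ∂(stdGaussian d).prod ν‖ := by
        rw [gaussianChannel, gaussianChannel, integral_map (by fun_prop) (by fun_prop),
          integral_map (by fun_prop) (by fun_prop), integral_add hdiff hcorrection,
          integral_sub hflow hshift, integral_smul,
          integral_apply_sub_posteriorMean hν hs hD hφ.norm_fderiv_le, smul_zero, add_zero]
        simp only [hzh, z]
    _ ≤ 2 * R ^ 2 * N * h ^ 2 := norm_integral_le_of_ae_norm_le hpointwise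

end GaussianChannel

/-- If `ν` is supported in a ball of radius `R` and `μ = γ_d ⋆ ν`, then
there is an `e^{R²/2}`-Lipschitz map pushing the standard Gaussian forward to `μ`. -/
theorem transport_from_gaussian_mixture
    (d : ℕ) (R : ℝ) (ν : Measure (Ed d)) [IsProbabilityMeasure ν]
    (hν : msupport ν ⊆ Metric.closedBall 0 R) :
    ∃ T : Ed d → Ed d,
      LipschitzWith (Real.toNNReal (Real.exp (R ^ 2 / 2))) T ∧
      Measure.map T (stdGaussian d) = mconv (stdGaussian d) ν := by
  have hae : ∀ᵐ y ∂ν, ‖y‖ ≤ R := by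
    simpa only [mem_closedBall_zero_iff] using ae_mem_of_msupport_subset hν
  have hR : 0 ≤ R := (norm_nonneg _).trans (norm_posteriorMean_le hae 0 0)
  have hfield (s : ℝ) (hs : s ∈ Icc (0 : ℝ) 1) :
      TaylorBound (posteriorMean ν s) (R ^ 2 * s) (20 * R ^ 3) :=
    (taylorBound_posteriorMean hae hs.1).mono le_rfl
      (mul_le_of_le_one_right (by positivity) (pow_le_one₀ hs.1 hs.2))
  have hmono : MonotoneOn (fun s => R ^ 2 * s) (Icc 0 1) :=
    (monotone_mul_left_of_nonneg (sq_nonneg R)).monotoneOn _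
  have hintegral : ∫ s in (0 : ℝ)..1, R ^ 2 * s = R ^ 2 / 2 := by
    rw [intervalIntegral.integral_const_mul, integral_id]
    ring
  simpa only [hintegral, gaussianChannel_zero, gaussianChannel_one] using
    (weakContinuityEquation_gaussianChannel hae).exists_lipschitzWith_map_eq (by positivity)
      hfield (by positivity) (fun s _ => norm_posteriorMean_le hae s) hmono
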